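/- Let d ∈ ℕ, let U ∈ GL_d(ℤ) be a unipotent matrix, and let μ be an ergodic U-invariant Borel probability measure on 𝕋^d = ℝ^d/ℤ^d whose support has exactly m ∈ ℕ connected components. Then for every n ∈ ℕ coprime to m, μ is the unique Uⁿ-invariant Borel probability measure on 𝕋^d whose support is contained in supp(μ); in other words, the restriction of Uⁿ to supp(μ) is uniquely ergodic with μ the unique invariant measure. -/

import Mathlib

open MeasureTheory Topology Pointwise

/-- The `d`-dimensional torus `ℝ^d/ℤ^d`. -/
abbrev Torus (d : ℕ) := Fin d → AddCircle (1 : ℝ)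

/-- The automorphism of the torus induced by an integer matrix. -/
noncomputable def toralAuto {d : ℕ} (U : Matrix (Fin d) (Fin d) ℤ) : Torus d → Torus d :=
  fun x i => ∑ j, U i j • x j

/-- The support of a measure. -/
def msupport {X : Type*} [TopologicalSpace X] [MeasurableSpace X] (μ : Measure X) : Set X :=
  {x : X | ∀ O : Set X, IsOpen O → x ∈ O → 0 < μ O}


open Function Set

noncomputable section

/-- The (additive) character of the torus with frequency `v`. -/
def chi {d : ℕ} (v : Fin d → ℤ) (x : Torus d) : AddCircle (1 : ℝ) := ∑ i, v i • x i

lemma chi_add {d : ℕ} (v w : Fin d → ℤ) (x : Torus d) : chi (v + w) x = chi v x + chi w x := by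
  simp [chi, add_smul, Finset.sum_add_distrib]

lemma chi_zero {d : ℕ} (x : Torus d) : chi 0 x = 0 := by simp [chi]

lemma chi_neg {d : ℕ} (v : Fin d → ℤ) (x : Torus d) : chi (-v) x = - chi v x := by
  simp [chi]

lemma chi_sub {d : ℕ} (v w : Fin d → ℤ) (x : Torus d) : chi (v - w) x = chi v x - chi w x := by
  rw [sub_eq_add_neg, chi_add, chi_neg, sub_eq_add_neg]

lemma chi_nsmul {d : ℕ} (k : ℕ) (v : Fin d → ℤ) (x : Torus d) : chi (k • v) x = k • chi v x := by
  induction k with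
  | zero => simp [chi_zero]
  | succ k ih => rw [succ_nsmul, chi_add, ih, succ_nsmul]

lemma continuous_chi {d : ℕ} (v : Fin d → ℤ) : Continuous (chi v) := by
  unfold chi
  fun_prop

lemma continuous_toralAuto {d : ℕ} (U : Matrix (Fin d) (Fin d) ℤ) :
    Continuous (toralAuto U) := by
  unfold toralAuto
  fun_prop

lemma chi_toralAuto {d : ℕ} (U : Matrix (Fin d) (Fin d) ℤ) (v : Fin d → ℤ) (x : Torus d) :
    chi v (toralAuto U x) = chi (Matrix.vecMul v U) x := by
  simp only [chi, toralAuto, Matrix.vecMul, dotProduct, Finset.smul_sum, Finset.sum_smul, smul_smul]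
  rw [Finset.sum_comm]

lemma chi_iterate {d : ℕ} (U : Matrix (Fin d) (Fin d) ℤ) (k : ℕ) (v : Fin d → ℤ) (x : Torus d) :
    chi v ((toralAuto U)^[k] x) = chi (Matrix.vecMul v (U ^ k)) x := by
  induction k generalizing v with
  | zero => simp
  | succ k ih =>
    rw [iterate_succ_apply', chi_toralAuto, ih, Matrix.vecMul_vecMul, pow_succ']

/-- The frequency `v` has a multiple that is constant on `S`. -/
def TorS {d : ℕ} (S : Set (Torus d)) (v : Fin d → ℤ) : Prop :=
  ∃ q : ℕ, 0 < q ∧ ∃ c, ∀ x ∈ S, q • chi v x = c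

lemma TorS.add {d : ℕ} {S : Set (Torus d)} {v w : Fin d → ℤ} (hv : TorS S v) (hw : TorS S w) :
    TorS S (v + w) := by
  obtain ⟨q, hq, c, hc⟩ := hv
  obtain ⟨r, hr, e, he⟩ := hw
  refine ⟨q * r, by positivity, r • c + q • e, fun x hx => ?_⟩
  rw [chi_add, smul_add, ← hc x hx, ← he x hx, smul_smul, smul_smul, mul_comm r q]

lemma TorS.neg {d : ℕ} {S : Set (Torus d)} {v : Fin d → ℤ} (hv : TorS S v) :
    TorS S (-v) := by
  obtain ⟨q, hq, c, hc⟩ := hv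
  refine ⟨q, hq, -c, fun x hx => ?_⟩
  rw [chi_neg, smul_neg, hc x hx]

lemma TorS.zero {d : ℕ} {S : Set (Torus d)} : TorS S (0 : Fin d → ℤ) :=
  ⟨1, one_pos, 0, fun x _ => by simp [chi_zero]⟩

lemma TorS.of_nsmul {d : ℕ} {S : Set (Torus d)} {v : Fin d → ℤ} {k : ℕ} (hk : 0 < k)
    (hv : TorS S (k • v)) : TorS S v := by
  obtain ⟨q, hq, c, hc⟩ := hv
  refine ⟨q * k, by positivity, c, fun x hx => ?_⟩
  rw [← hc x hx, chi_nsmul, smul_smul]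

lemma TorS.vecMul {d : ℕ} {S : Set (Torus d)} {U : Matrix (Fin d) (Fin d) ℤ}
    (hS : ∀ x ∈ S, toralAuto U x ∈ S) {v : Fin d → ℤ} (hv : TorS S v) :
    TorS S (Matrix.vecMul v U) := by
  obtain ⟨q, hq, c, hc⟩ := hv
  refine ⟨q, hq, c, fun x hx => ?_⟩
  rw [← chi_toralAuto, hc _ (hS x hx)]

lemma TorS.vecMul_sub_one {d : ℕ} {S : Set (Torus d)} {U : Matrix (Fin d) (Fin d) ℤ}
    (hS : ∀ x ∈ S, toralAuto U x ∈ S) {v : Fin d → ℤ} (hv : TorS S v) :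
    TorS S (Matrix.vecMul v (U - 1)) := by
  rw [Matrix.vecMul_sub, Matrix.vecMul_one, sub_eq_add_neg]
  exact (hv.vecMul hS).add hv.neg

/-- `1 + U + ... + U^(k-1)`, applied to a frequency `w`, equals `k w` modulo torsion if
`w (U - 1)` is torsion. -/
lemma geom_tor {d : ℕ} {S : Set (Torus d)} {U : Matrix (Fin d) (Fin d) ℤ}
    (hS : ∀ x ∈ S, toralAuto U x ∈ S) {w : Fin d → ℤ} (hw : TorS S (Matrix.vecMul w (U - 1)))
    (k : ℕ) : TorS S (Matrix.vecMul w (∑ i ∈ Finset.range k, U ^ i) - k • w) := by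
  have key : ∀ i, TorS S (Matrix.vecMul w (U ^ i) - w) := by
    intro i
    induction i with
    | zero => simpa using TorS.zero
    | succ i ih =>
      have h := (ih.vecMul hS).add hw
      convert h using 1
      rw [Matrix.sub_vecMul, Matrix.vecMul_vecMul, Matrix.vecMul_sub, Matrix.vecMul_one, pow_succ]
      abel
  induction k with
  | zero => simpa using TorS.zero
  | succ k ih =>
    have h := ih.add (key k)
    convert h using 1
    rw [Finset.sum_range_succ, Matrix.vecMul_add, succ_nsmul]
    abel

lemma tor_of_geom {d : ℕ} {S : Set (Torus d)} {U : Matrix (Fin d) (Fin d) ℤ}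
    (hU : (U - 1) ^ d = 0)
    (hS : ∀ x ∈ S, toralAuto U x ∈ S) {w : Fin d → ℤ} {k : ℕ} (hk : 0 < k)
    (hw : TorS S (Matrix.vecMul w (∑ i ∈ Finset.range k, U ^ i))) : TorS S w := by
  have hcomm : ∀ j, Commute ((U - 1) ^ j) (∑ i ∈ Finset.range k, U ^ i) := fun j =>
    Commute.pow_left (Commute.sum_right _ _ _ fun i _ =>
      ((Commute.refl U).sub_left (Commute.one_left _)).pow_right i) j
  have h1 : ∀ j, TorS S (Matrix.vecMul (Matrix.vecMul w ((U - 1) ^ j))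
      (∑ i ∈ Finset.range k, U ^ i)) := by
    intro j
    rw [Matrix.vecMul_vecMul, hcomm j, ← Matrix.vecMul_vecMul]
    induction j with
    | zero => simpa using hw
    | succ j ih =>
      rw [pow_succ, ← Matrix.vecMul_vecMul]
      exact ih.vecMul_sub_one hS
  have h2 : ∀ j, j ≤ d → TorS S (Matrix.vecMul w ((U - 1) ^ (d - j))) := by
    intro j
    induction j with
    | zero => intro _; simpa [hU] using TorS.zero
    | succ j ih =>
      intro hj
      have e := ih (by omega)
      have h3 : d - j = (d - (j + 1)) + 1 := by omega
      rw [h3, pow_succ, ← Matrix.vecMul_vecMul] at e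
      have h4 := (h1 (d - (j + 1))).add (geom_tor hS e k).neg
      apply TorS.of_nsmul hk
      convert h4 using 1
      abel
  simpa using h2 d le_rfl

/-- The multiplicative character. -/
def ee {d : ℕ} (v : Fin d → ℤ) (x : Torus d) : ℂ := (AddCircle.toCircle (chi v x) : ℂ)

lemma continuous_ee {d : ℕ} (v : Fin d → ℤ) : Continuous (ee v) :=
  continuous_subtype_val.comp (AddCircle.continuous_toCircle.comp (continuous_chi v))

lemma norm_ee {d : ℕ} (v : Fin d → ℤ) (x : Torus d) : ‖ee v x‖ = 1 := Circle.norm_coe _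

lemma ee_add {d : ℕ} (v w : Fin d → ℤ) (x : Torus d) : ee (v + w) x = ee v x * ee w x := by
  simp [ee, chi_add, AddCircle.toCircle_add]

lemma ee_neg {d : ℕ} (v : Fin d → ℤ) (x : Torus d) :
    ee (-v) x = (starRingEnd ℂ) (ee v x) := by
  rw [ee, ee, chi_neg, AddCircle.toCircle_neg]
  exact Circle.coe_inv_eq_conj _

lemma ee_iterate {d : ℕ} (U : Matrix (Fin d) (Fin d) ℤ) (k : ℕ) (v : Fin d → ℤ) (x : Torus d) :
    ee v ((toralAuto U)^[k] x) = ee (Matrix.vecMul v (U ^ k)) x := by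
  rw [ee, ee, chi_iterate]

lemma ee_eq_mFourier {d : ℕ} (v : Fin d → ℤ) (x : Torus d) :
    ee v x = UnitAddTorus.mFourier v x := by
  simp only [ee, chi, UnitAddTorus.mFourier, ContinuousMap.coe_mk, fourier_apply]
  generalize (Finset.univ : Finset (Fin d)) = s
  induction s using Finset.induction_on with
  | empty => simp
  | insert a s ha ih => rw [Finset.sum_insert ha, Finset.prod_insert ha, ← ih,
      AddCircle.toCircle_add]; simp

lemma integrable_ee {d : ℕ} (ν : Measure (Torus d)) [IsFiniteMeasure ν] (v : Fin d → ℤ) :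
    Integrable (ee v) ν :=
  Integrable.of_bound (continuous_ee v).aestronglyMeasurable 1
    (Filter.Eventually.of_forall fun x => (norm_ee v x).le)

lemma measure_ext_ee {d : ℕ} (μ ν : Measure (Torus d)) [IsProbabilityMeasure μ]
    [IsProbabilityMeasure ν] (h : ∀ v, ∫ x, ee v x ∂ν = ∫ x, ee v x ∂μ) : ν = μ := by
  have hint : ∀ (ρ : Measure (Torus d)) [IsProbabilityMeasure ρ] (f : C(Torus d, ℂ)),
      Integrable f ρ := fun ρ _ f =>
    Integrable.of_bound f.continuous.aestronglyMeasurable ‖f‖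
      (Filter.Eventually.of_forall fun x => f.norm_coe_le_norm x)
  have hcont : ∀ (ρ : Measure (Torus d)) [IsProbabilityMeasure ρ],
      Continuous (fun f : C(Torus d, ℂ) => ∫ x, f x ∂ρ) := by
    intro ρ _
    refine (LipschitzWith.of_dist_le_mul (K := 1) fun f g => ?_).continuous
    rw [dist_eq_norm, ← integral_sub (hint ρ f) (hint ρ g), dist_eq_norm]
    refine (norm_integral_le_of_norm_le_const (C := ‖f - g‖)
      (Filter.Eventually.of_forall fun x => (f - g).norm_coe_le_norm x)).trans ?_
    simp
  have hall : ∀ f : C(Torus d, ℂ), ∫ x, f x ∂ν = ∫ x, f x ∂μ := by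
    intro f
    have hf : f ∈ (Submodule.span ℂ (range <| UnitAddTorus.mFourier
        (d := Fin d))).topologicalClosure := by
      rw [UnitAddTorus.span_mFourier_closure_eq_top]; trivial
    have hcl : IsClosed {f : C(Torus d, ℂ) | ∫ x, f x ∂ν = ∫ x, f x ∂μ} :=
      isClosed_eq (hcont ν) (hcont μ)
    refine closure_minimal ?_ hcl hf
    intro g hg
    refine Submodule.span_induction (p := fun g _ => ∫ x, g x ∂ν = ∫ x, g x ∂μ)
      ?_ ?_ ?_ ?_ hg
    · rintro _ ⟨v, rfl⟩
      simpa only [ee_eq_mFourier] using h v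
    · simp
    · intro a b _ _ ha hb
      simp only [ContinuousMap.add_apply]
      rw [integral_add (hint ν a) (hint ν b), integral_add (hint μ a) (hint μ b), ha, hb]
    · intro c a _ ha
      simp only [ContinuousMap.smul_apply]
      rw [integral_smul, integral_smul, ha]
  apply ext_of_forall_integral_eq_of_IsFiniteMeasure
  intro f
  have := hall ⟨fun x => (f x : ℂ), by fun_prop⟩
  simp only [ContinuousMap.coe_mk] at this
  rw [integral_complex_ofReal, integral_complex_ofReal] at this
  exact_mod_cast this

lemma msupport_eq {d : ℕ} (μ : Measure (Torus d)) : msupport μ = μ.support := by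
  rw [Measure.support_eq_forall_isOpen]
  ext x
  exact ⟨fun h O hx hO => h O hO hx, fun h O hO hx => h O hx hO⟩

lemma ae_mem_msupport {d : ℕ} (μ : Measure (Torus d)) : ∀ᵐ x ∂μ, x ∈ msupport μ := by
  rw [msupport_eq]
  exact Measure.support_mem_ae

lemma isClosed_msupport {d : ℕ} (μ : Measure (Torus d)) : IsClosed (msupport μ) := by
  rw [msupport_eq]
  exact Measure.isClosed_support

lemma msupport_subset {d : ℕ} (μ : Measure (Torus d)) {F : Set (Torus d)} (hF : IsClosed F)
    (h : ∀ᵐ x ∂μ, x ∈ F) : msupport μ ⊆ F := by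
  rw [msupport_eq]
  exact Measure.support_subset_of_isClosed hF h

lemma mapsTo_msupport {d : ℕ} {μ : Measure (Torus d)} {f : Torus d → Torus d}
    (hf : Continuous f) (hμ : MeasurePreserving f μ μ) : MapsTo f (msupport μ) (msupport μ) := by
  intro x hx O hO hxO
  rw [← hμ.measure_preimage hO.measurableSet.nullMeasurableSet]
  exact hx _ (hO.preimage hf) hxO

lemma surjOn_msupport {d : ℕ} {μ : Measure (Torus d)} {f : Torus d → Torus d}
    (hf : Continuous f) (hμ : MeasurePreserving f μ μ) : SurjOn f (msupport μ) (msupport μ) := by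
  have hcl : IsClosed (f '' msupport μ) :=
    ((isClosed_msupport μ).isCompact.image hf).isClosed
  refine msupport_subset μ hcl ?_
  have h : ∀ᵐ x ∂(μ.map f), x ∈ f '' msupport μ := by
    refine (ae_map_iff (p := fun y => y ∈ f '' msupport μ) hf.measurable.aemeasurable
      hcl.measurableSet).2 ?_
    filter_upwards [ae_mem_msupport μ] with x hx using ⟨x, hx, rfl⟩
  rwa [hμ.map_eq] at h

/-- The part of `S` lying in the components in `A`. -/
def Bset {d : ℕ} (S : Set (Torus d)) (A : Set (ConnectedComponents S)) : Set (Torus d) :=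
  {x | ∃ h : x ∈ S, ConnectedComponents.mk (⟨x, h⟩ : S) ∈ A}

lemma isClosed_Bset {d : ℕ} {S : Set (Torus d)} (hS : IsClosed S)
    [Finite (ConnectedComponents S)] (A : Set (ConnectedComponents S)) : IsClosed (Bset S A) := by
  have : CompactSpace S := isCompact_iff_compactSpace.1 hS.isCompact
  have h : IsClosed (ConnectedComponents.mk ⁻¹' A : Set S) :=
    (Set.toFinite A).isClosed.preimage ConnectedComponents.continuous_coe
  have h2 := hS.isClosedEmbedding_subtypeVal.isClosedMap _ h
  convert h2
  ext x
  simp [Bset]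

lemma comp_main {d : ℕ} {μ : Measure (Torus d)} {f : Torus d → Torus d} (hf : Continuous f)
    (herg : Ergodic f μ) {m : ℕ} (hm : 0 < m)
    (hcomp : Nat.card (ConnectedComponents ↥(msupport μ)) = m)
    (hfS : MapsTo f (msupport μ) (msupport μ)) :
    ∃ σ : Equiv.Perm (ConnectedComponents (msupport μ)),
      (∀ x (hx : x ∈ msupport μ), ConnectedComponents.mk (⟨f x, hfS hx⟩ : msupport μ) =
        σ (ConnectedComponents.mk ⟨x, hx⟩)) ∧
      (σ ^ m = 1) ∧ (∀ D D', σ.SameCycle D D') := by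
  have hfin : Finite (ConnectedComponents (msupport μ)) :=
    Nat.finite_of_card_ne_zero (by omega)
  have := Fintype.ofFinite (ConnectedComponents (msupport μ))
  have hg : Continuous (hfS.restrict f _ _) := hf.restrict hfS
  have hgs : Surjective (hfS.restrict f _ _) := by
    rintro ⟨y, hy⟩
    obtain ⟨x, hx, rfl⟩ := surjOn_msupport hf herg.toMeasurePreserving hy
    exact ⟨⟨x, hx⟩, rfl⟩
  have hbij : Bijective hg.connectedComponentsMap :=
    Finite.injective_iff_bijective.1 (Finite.injective_iff_surjective.2
      (hg.connectedComponentsMap_surjective hgs))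
  let σ : Equiv.Perm (ConnectedComponents (msupport μ)) := Equiv.ofBijective _ hbij
  have hσ : ∀ x (hx : x ∈ msupport μ), ConnectedComponents.mk (⟨f x, hfS hx⟩ : msupport μ) =
        σ (ConnectedComponents.mk ⟨x, hx⟩) := fun x hx => rfl
  have hcyc : ∀ D D', σ.SameCycle D D' := by
    intro D
    let A : Set (ConnectedComponents (msupport μ)) := {D' | σ.SameCycle D D'}
    have hA : ∀ E, σ E ∈ A ↔ E ∈ A := fun E => Equiv.Perm.sameCycle_apply_right
    have hBc := isClosed_Bset (isClosed_msupport μ) A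
    have hinv : f ⁻¹' (Bset _ A) =ᵐ[μ] Bset _ A := by
      filter_upwards [ae_mem_msupport μ] with x hx
      apply propext
      constructor
      · rintro ⟨h, h2⟩
        exact ⟨hx, (hA _).1 h2⟩
      · rintro ⟨h, h2⟩
        exact ⟨hfS hx, (hA _).2 h2⟩
    rcases herg.quasiErgodic.ae_mem_or_ae_notMem₀ hBc.measurableSet.nullMeasurableSet hinv
      with h | h
    · have h2 := msupport_subset μ hBc h
      intro D'
      obtain ⟨⟨y, hy⟩, rfl⟩ := ConnectedComponents.surjective_coe D'
      exact (h2 hy).2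
    · exfalso
      have h2 := msupport_subset μ (isClosed_Bset (isClosed_msupport μ) Aᶜ) (by
        filter_upwards [h, ae_mem_msupport μ] with x hx hxS
        exact ⟨hxS, fun h3 => hx ⟨hxS, h3⟩⟩)
      obtain ⟨⟨y, hy⟩, rfl⟩ := ConnectedComponents.surjective_coe D
      exact (h2 hy).2 (Equiv.Perm.SameCycle.refl _ _)
  refine ⟨σ, hσ, ?_, hcyc⟩
  have hon : σ.IsCycleOn ((Finset.univ : Finset (ConnectedComponents (msupport μ))) : Set _) := by
    refine ⟨?_, fun x _ y _ => hcyc x y⟩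
    simp
  ext D
  have := hon.pow_card_apply (Finset.mem_univ D)
  rwa [Finset.card_univ, ← Nat.card_eq_fintype_card, hcomp] at this

lemma comp_iterate {X : Type*} [TopologicalSpace X] {S : Set X} {f : X → X}
    (hfS : MapsTo f S S) (σ : Equiv.Perm (ConnectedComponents S))
    (hσ : ∀ x (hx : x ∈ S), ConnectedComponents.mk (⟨f x, hfS hx⟩ : S) =
        σ (ConnectedComponents.mk ⟨x, hx⟩)) (k : ℕ) (x : X) (hx : x ∈ S) :
    ConnectedComponents.mk (⟨f^[k] x, hfS.iterate k hx⟩ : S) =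
      (σ ^ k) (ConnectedComponents.mk ⟨x, hx⟩) := by
  induction k with
  | zero => rfl
  | succ k ih =>
    rw [pow_succ', Equiv.Perm.mul_apply, ← ih, ← hσ _ (hfS.iterate k hx)]
    congr 2
    exact iterate_succ_apply' f k x

lemma equi {d : ℕ} {S : Set (Torus d)} (hS : IsClosed S) {f : Torus d → Torus d}
    (hfS : MapsTo f S S) [Fintype (ConnectedComponents S)]
    (σ : Equiv.Perm (ConnectedComponents S))
    (hσ : ∀ x (hx : x ∈ S), ConnectedComponents.mk (⟨f x, hfS hx⟩ : S) =
        σ (ConnectedComponents.mk ⟨x, hx⟩))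
    {m n : ℕ} (hcop : Nat.Coprime n m) (hσm : σ ^ m = 1) (hcyc : ∀ D D', σ.SameCycle D D')
    (ν : Measure (Torus d)) [IsProbabilityMeasure ν] (hν : MeasurePreserving (f^[n]) ν ν)
    (hνS : ∀ᵐ x ∂ν, x ∈ S) (D : ConnectedComponents S) :
    ν (Bset S {D}) = (Fintype.card (ConnectedComponents S) : ENNReal)⁻¹ := by
  have hmeas : ∀ D, MeasurableSet (Bset S {D}) := fun D => (isClosed_Bset hS _).measurableSet
  have h1 : ∀ D, ν (Bset S {(σ ^ n) D}) = ν (Bset S {D}) := by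
    intro D
    rw [← hν.measure_preimage (hmeas _).nullMeasurableSet]
    apply measure_congr
    filter_upwards [hνS] with x hx
    apply propext
    have hit := comp_iterate hfS σ hσ n x hx
    constructor
    · rintro ⟨h, h2⟩
      refine ⟨hx, ?_⟩
      exact (σ ^ n).injective (hit.symm.trans h2)
    · rintro ⟨h, h2⟩
      refine ⟨hfS.iterate n hx, ?_⟩
      rw [mem_singleton_iff] at h2 ⊢
      rw [hit, h2]
  have h2 : ∀ (k : ℤ) D, ν (Bset S {((σ ^ n) ^ k) D}) = ν (Bset S {D}) := by
    intro k
    induction k using Int.induction_on with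
    | zero => simp
    | succ k ih =>
      intro D
      rw [zpow_add_one, Equiv.Perm.mul_apply, ih, h1]
    | pred k ih =>
      intro D
      rw [zpow_sub_one, Equiv.Perm.mul_apply, ih, ← h1]
      simp
  have h3 : ∃ k : ℤ, (σ ^ n) ^ k = σ := by
    refine ⟨Nat.gcdA n m, ?_⟩
    have h := Nat.gcd_eq_gcd_ab n m
    rw [hcop.gcd_eq_one] at h
    have h4 : σ ^ ((n : ℤ) * Nat.gcdA n m + m * Nat.gcdB n m) = σ := by
      rw [← h]; simp
    rw [zpow_add, zpow_mul, zpow_mul, zpow_natCast, zpow_natCast, hσm] at h4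
    simpa using h4
  obtain ⟨k, hk⟩ := h3
  have h4 : ∀ D', ν (Bset S {D'}) = ν (Bset S {D}) := by
    intro D'
    obtain ⟨j, rfl⟩ := hcyc D D'
    nth_rewrite 1 [← hk]
    rw [← zpow_mul, h2]
  have hsum : ∑ D', ν (Bset S {D'}) = 1 := by
    rw [← measure_biUnion_finset]
    · rw [← measure_univ (μ := ν)]
      apply measure_congr
      filter_upwards [hνS] with x hx
      apply propext
      refine ⟨fun _ => trivial, fun _ => ?_⟩
      refine mem_iUnion₂.2 ⟨ConnectedComponents.mk ⟨x, hx⟩, Finset.mem_univ _, hx, rfl⟩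
    · intro D1 _ D2 _ h
      refine Set.disjoint_left.2 ?_
      rintro x ⟨hx, h1⟩ ⟨_, h2⟩
      exact h (h1.symm.trans h2)
    · exact fun D _ => hmeas D
  simp only [h4, Finset.sum_const, nsmul_eq_mul, Finset.card_univ] at hsum
  exact ENNReal.eq_inv_of_mul_eq_one_left (by rwa [mul_comm])

/-- Torsion characters are constant on components. -/
lemma tor_const {d : ℕ} {S : Set (Torus d)} {v : Fin d → ℤ} {q : ℕ} (hq : 0 < q)
    {c : AddCircle (1 : ℝ)} (hc : ∀ x ∈ S, q • chi v x = c) {x y : Torus d} (hx : x ∈ S)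
    (hy : y ∈ S) (hxy : ConnectedComponents.mk (⟨x, hx⟩ : S) = ConnectedComponents.mk ⟨y, hy⟩) :
    chi v x = chi v y := by
  let g : S → AddCircle (1 : ℝ) := fun z => chi v z
  have hg : Continuous g := (continuous_chi v).comp continuous_subtype_val
  have hpre : IsPreconnected (g '' connectedComponent (⟨y, hy⟩ : S)) :=
    isPreconnected_connectedComponent.image _ hg.continuousOn
  have hfin : (g '' connectedComponent (⟨y, hy⟩ : S)).Finite := by
    refine ((AddCircle.finite_torsion (1 : ℝ) hq).image (fun u => u + g ⟨y, hy⟩)).subset ?_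
    rintro _ ⟨z, _, rfl⟩
    refine ⟨g z - g ⟨y, hy⟩, ?_, by simp⟩
    change q • (g z - g ⟨y, hy⟩) = 0
    rw [smul_sub, hc _ z.2, hc _ hy, sub_self]
  have hsub := hfin.countable.isTotallyDisconnected _ Subset.rfl hpre
  exact hsub ⟨⟨x, hx⟩, ConnectedComponents.coe_eq_coe'.1 hxy, rfl⟩
    ⟨⟨y, hy⟩, mem_connectedComponent, rfl⟩

lemma tor_integral {d : ℕ} {S : Set (Torus d)} (hS : IsClosed S)
    [Fintype (ConnectedComponents S)] {v : Fin d → ℤ} (hv : TorS S v)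
    (μ ν : Measure (Torus d)) [IsProbabilityMeasure μ] [IsProbabilityMeasure ν]
    (hμS : ∀ᵐ x ∂μ, x ∈ S) (hνS : ∀ᵐ x ∂ν, x ∈ S)
    (h : ∀ D : ConnectedComponents S, ν (Bset S {D}) = μ (Bset S {D})) :
    ∫ x, ee v x ∂ν = ∫ x, ee v x ∂μ := by
  obtain ⟨q, hq, c, hc⟩ := hv
  have hrep : ∀ D : ConnectedComponents S, ∃ y : S, ConnectedComponents.mk y = D :=
    ConnectedComponents.surjective_coe
  choose r hr using hrep
  have key : ∀ (ρ : Measure (Torus d)) [IsProbabilityMeasure ρ], (∀ᵐ x ∂ρ, x ∈ S) →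
      ∫ x, ee v x ∂ρ = ∑ D, ρ.real (Bset S {D}) • ee v (r D) := by
    intro ρ _ hρ
    have h1 : ee v =ᵐ[ρ] fun x => ∑ D, (Bset S {D}).indicator (fun _ => ee v (r D)) x := by
      filter_upwards [hρ] with x hx
      rw [Finset.sum_eq_single (ConnectedComponents.mk ⟨x, hx⟩)]
      · rw [indicator_of_mem (show x ∈ Bset S {ConnectedComponents.mk ⟨x, hx⟩} from ⟨hx, rfl⟩)]
        rw [ee, ee, tor_const hq hc hx (r _).2 (hr _).symm]
      · intro D _ hD
        refine indicator_of_notMem ?_ _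
        rintro ⟨_, h2⟩
        exact hD h2.symm
      · simp
    rw [integral_congr_ae h1, integral_finsetSum]
    · refine Finset.sum_congr rfl fun D _ => ?_
      rw [integral_indicator_const _ (isClosed_Bset hS _).measurableSet]
    · intro D _
      exact (integrable_const _).indicator (isClosed_Bset hS _).measurableSet
  rw [key ν hνS, key μ hμS]
  simp only [Measure.real, h]

lemma integral_ee_iter {d : ℕ} {U : Matrix (Fin d) (Fin d) ℤ} {ν : Measure (Torus d)} {k : ℕ}
    (hν : MeasurePreserving ((toralAuto U)^[k]) ν ν) (v : Fin d → ℤ) :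
    ∫ x, ee (Matrix.vecMul v (U ^ k)) x ∂ν = ∫ x, ee v x ∂ν := by
  conv_rhs => rw [← hν.map_eq]
  rw [integral_map hν.aemeasurable (continuous_ee v).aestronglyMeasurable]
  simp only [ee_iterate]

lemma ortho {d : ℕ} {U : Matrix (Fin d) (Fin d) ℤ} {ν : Measure (Torus d)}
    [IsProbabilityMeasure ν] {n : ℕ} (hν : MeasurePreserving ((toralAuto U)^[n]) ν ν)
    (v : Fin d → ℤ)
    (h : ∀ k : ℕ, 0 < k → ∫ x, ee (Matrix.vecMul v (U ^ (n * k)) - v) x ∂ν = 0) :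
    ∫ x, ee v x ∂ν = 0 := by
  have hνk : ∀ k, MeasurePreserving ((toralAuto U)^[n * k]) ν ν := by
    intro k
    rw [iterate_mul]
    exact hν.iterate k
  set a : ℕ → Fin d → ℤ := fun i => Matrix.vecMul v (U ^ (n * i)) with ha
  have hlt : ∀ i j, j < i → ∫ x, ee (a i - a j) x ∂ν = 0 := by
    intro i j hij
    obtain ⟨k, rfl⟩ := Nat.exists_eq_add_of_lt hij
    rw [← h (k + 1) (by omega), ← integral_ee_iter (hνk j) (Matrix.vecMul v (U ^ (n * (k + 1))) - v),
      Matrix.sub_vecMul,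
      Matrix.vecMul_vecMul, ← pow_add, ← mul_add]
    have e : k + 1 + j = j + k + 1 := by ring
    rw [e]
  have horth : ∀ i j, ∫ x, ee (a i - a j) x ∂ν = if i = j then 1 else 0 := by
    intro i j
    rcases lt_trichotomy i j with hij | rfl | hij
    · rw [if_neg hij.ne]
      have h1 := hlt j i hij
      have h2 : ∀ x, ee (a i - a j) x = (starRingEnd ℂ) (ee (a j - a i) x) := by
        intro x
        rw [← ee_neg, neg_sub]
      simp only [h2]
      rw [integral_conj, h1, map_zero]
    · simp [ee, chi_zero]
    · rw [if_neg hij.ne', hlt i j hij]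
  set c := ∫ x, ee v x ∂ν with hc
  have hbound : ∀ k : ℕ, 0 < k → (k : ℝ) * ‖c‖ ≤ 1 := by
    intro k hk
    set F : Torus d → ℂ := fun x => ∑ i ∈ Finset.range (k ^ 2), ee (a i) x with hF
    have hFc : Continuous F := continuous_finsetSum _ fun i _ => continuous_ee _
    have hFn : ∀ x, ‖F x‖ ≤ (k ^ 2 : ℕ) := by
      intro x
      refine (norm_sum_le _ _).trans ?_
      simp [norm_ee]
    have hFi : Integrable F ν := Integrable.of_bound hFc.aestronglyMeasurable _
      (Filter.Eventually.of_forall hFn)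
    have hF2i : Integrable (fun x => ‖F x‖ ^ 2) ν := by
      refine Integrable.of_bound (by fun_prop) (((k ^ 2 : ℕ) : ℝ) ^ 2)
        (Filter.Eventually.of_forall fun x => ?_)
      rw [norm_pow, norm_norm]
      exact pow_le_pow_left₀ (norm_nonneg _) (hFn x) 2
    have hF1 : ∫ x, F x ∂ν = (k ^ 2 : ℕ) * c := by
      rw [hF, integral_finsetSum _ fun i _ => integrable_ee ν _]
      simp only [ha, integral_ee_iter (hνk _)]
      simp [hc]
    have hF2 : ∫ x, ‖F x‖ ^ 2 ∂ν = k ^ 2 := by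
      have h1 : ∀ x, ((‖F x‖ ^ 2 : ℝ) : ℂ) =
          ∑ i ∈ Finset.range (k ^ 2), ∑ j ∈ Finset.range (k ^ 2), ee (a i - a j) x := by
        intro x
        rw [Complex.ofReal_pow, ← Complex.mul_conj', hF, map_sum, Finset.sum_mul_sum]
        simp only [sub_eq_add_neg, ee_add, ee_neg]
      have h2 : ∫ x, ((‖F x‖ ^ 2 : ℝ) : ℂ) ∂ν = ((k ^ 2 : ℝ) : ℂ) := by
        simp only [h1]
        rw [integral_finsetSum _ fun i _ => integrable_finsetSum _ fun j _ => integrable_ee ν _]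
        simp only [integral_finsetSum _ fun j _ => integrable_ee ν _, horth, Finset.sum_ite_eq]
        rw [Finset.sum_congr rfl (fun i hi => if_pos hi)]
        simp
      rw [integral_complex_ofReal] at h2
      exact_mod_cast h2
    have h3 : ‖∫ x, F x ∂ν‖ ≤ ∫ x, ‖F x‖ ∂ν := norm_integral_le_integral_norm _
    have h4 : ∫ x, 2 * k * ‖F x‖ ∂ν ≤ ∫ x, ((k : ℝ) ^ 2 + ‖F x‖ ^ 2) ∂ν := by
      refine integral_mono (hFi.norm.const_mul _) ((integrable_const _).add hF2i) fun x => ?_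
      change 2 * k * ‖F x‖ ≤ (k : ℝ) ^ 2 + ‖F x‖ ^ 2
      nlinarith [sq_nonneg ((k : ℝ) - ‖F x‖)]
    rw [integral_const_mul, integral_add (integrable_const _) hF2i, hF2] at h4
    rw [hF1] at h3
    simp only [integral_const, probReal_univ, smul_eq_mul, one_mul] at h4
    rw [norm_mul, Complex.norm_natCast] at h3
    push_cast at h3
    have hk' : (0 : ℝ) < k := by exact_mod_cast hk
    have h5 : 2 * (k : ℝ) * (k ^ 2 * ‖c‖) ≤ 2 * k ^ 2 := by
      calc 2 * (k : ℝ) * (k ^ 2 * ‖c‖) ≤ 2 * k * ∫ x, ‖F x‖ ∂ν := by gcongr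
        _ ≤ _ := by linarith
    have h6 : (2 * (k : ℝ) ^ 2) * (k * ‖c‖) ≤ (2 * (k : ℝ) ^ 2) * 1 := by linarith
    exact le_of_mul_le_mul_left h6 (by positivity)
  by_contra hne
  have hpos : 0 < ‖c‖ := norm_pos_iff.2 hne
  obtain ⟨k, hk⟩ := exists_nat_gt (1 / ‖c‖)
  have hk0 : 0 < k := by
    have : (0 : ℝ) < k := lt_trans (by positivity) hk
    exact_mod_cast this
  rw [div_lt_iff₀ hpos] at hk
  linarith [hbound k hk0]

lemma rot {d : ℕ} {S : Set (Torus d)} (hS : IsClosed S) {U : Matrix (Fin d) (Fin d) ℤ}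
    {ν : Measure (Torus d)} [IsProbabilityMeasure ν] {N : ℕ}
    (hν : MeasurePreserving ((toralAuto U)^[N]) ν ν) (hνS : ∀ᵐ x ∂ν, x ∈ S) (v : Fin d → ℤ)
    (hne : ∀ x ∈ S, chi (Matrix.vecMul v (U ^ N) - v) x ≠ 0)
    (hinv : ∀ x ∈ S, chi (Matrix.vecMul v (U ^ N) - v) ((toralAuto U)^[N] x) =
      chi (Matrix.vecMul v (U ^ N) - v) x) :
    ∫ x, ee v x ∂ν = 0 := by
  set u := Matrix.vecMul v (U ^ N) - v with hu
  have hne1 : ∀ x ∈ S, 1 - ee u x ≠ 0 := by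
    intro x hx h0
    apply hne x hx
    apply AddCircle.injective_toCircle one_ne_zero
    rw [AddCircle.toCircle_zero]
    apply Subtype.ext
    exact (sub_eq_zero.1 h0).symm
  set H : Torus d → ℂ := fun x => (1 - ee u x)⁻¹ * ee v x with hH
  have hHm : Measurable H :=
    ((measurable_const.sub (continuous_ee u).measurable).inv).mul (continuous_ee v).measurable
  have hHc : ContinuousOn H S :=
    ((continuous_const.sub (continuous_ee u)).continuousOn.inv₀ hne1).mul
      (continuous_ee v).continuousOn
  obtain ⟨C, hC⟩ := hS.isCompact.exists_bound_of_continuousOn hHc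
  have hHi : Integrable H ν := Integrable.of_bound hHm.aestronglyMeasurable C (by
    filter_upwards [hνS] with x hx using hC x hx)
  have h1 : ∫ x, H ((toralAuto U)^[N] x) ∂ν = ∫ x, H x ∂ν := by
    conv_rhs => rw [← hν.map_eq]
    rw [integral_map hν.aemeasurable hHm.aestronglyMeasurable]
  have hHi2 : Integrable (fun x => H ((toralAuto U)^[N] x)) ν :=
    hν.integrable_comp_of_integrable hHi
  have h2 : (fun x => H x - H ((toralAuto U)^[N] x)) =ᵐ[ν] ee v := by
    filter_upwards [hνS] with x hx
    have e1 : ee u ((toralAuto U)^[N] x) = ee u x := by rw [ee, ee, hinv x hx]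
    have e2 : ee v ((toralAuto U)^[N] x) = ee u x * ee v x := by
      rw [ee_iterate, ← ee_add, hu, sub_add_cancel]
    simp only [hH, e1, e2]
    have := hne1 x hx
    field_simp
  rw [← integral_congr_ae h2, integral_sub hHi hHi2, h1, sub_self]

lemma main_zero {d : ℕ} {S : Set (Torus d)} (hS : IsClosed S) {U : Matrix (Fin d) (Fin d) ℤ}
    (hU : (U - 1) ^ d = 0) (hfS : MapsTo (toralAuto U) S S)
    (hE : ∀ w, (∀ x ∈ S, chi (Matrix.vecMul w U) x = chi w x) → ∃ c, ∀ x ∈ S, chi w x = c)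
    {m n : ℕ} (hm : 0 < m) (hn : 0 < n)
    (hper : ∀ x (hx : x ∈ S), ConnectedComponents.mk
      (⟨(toralAuto U)^[n * m] x, hfS.iterate _ hx⟩ : S) = ConnectedComponents.mk ⟨x, hx⟩)
    {ν : Measure (Torus d)} [IsProbabilityMeasure ν]
    (hν : MeasurePreserving ((toralAuto U)^[n]) ν ν) (hνS : ∀ᵐ x ∂ν, x ∈ S)
    (j : ℕ) : ∀ v : Fin d → ℤ, Matrix.vecMul v ((U - 1) ^ j) = 0 → ¬ TorS S v →
      ∫ x, ee v x ∂ν = 0 := by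
  have hgeom : ∀ (v : Fin d → ℤ) k, Matrix.vecMul v (U ^ k) - v =
      Matrix.vecMul (Matrix.vecMul v (U - 1)) (∑ i ∈ Finset.range k, U ^ i) := by
    intro v k
    rw [Matrix.vecMul_vecMul, mul_geom_sum, Matrix.vecMul_sub, Matrix.vecMul_one]
  induction j with
  | zero =>
    intro v hv hT
    rw [pow_zero, Matrix.vecMul_one] at hv
    exact absurd (hv ▸ TorS.zero) hT
  | succ j ih =>
    intro v hv hT
    by_cases hw : TorS S (Matrix.vecMul v (U - 1))
    · obtain ⟨q, hq, c, hc⟩ := hw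
      by_cases hr : ∃ r : ℕ, 0 < r ∧ r • c = 0
      · exfalso
        obtain ⟨r, hr, hrc⟩ := hr
        obtain ⟨e, he⟩ := hE ((r * q) • v) (by
          intro x hx
          have h1 := hc x hx
          rw [Matrix.vecMul_sub, Matrix.vecMul_one, chi_sub] at h1
          rw [Matrix.smul_vecMul, chi_nsmul, chi_nsmul, ← sub_eq_zero, ← smul_sub, mul_smul, h1, hrc])
        exact hT ⟨r * q, by positivity, e, fun x hx => by rw [← chi_nsmul, he x hx]⟩
      · push Not at hr
        have hN : 0 < n * m := by positivity
        have hq' : ∀ x ∈ S, q • chi (Matrix.vecMul v (U ^ (n * m)) - v) x = (n * m) • c := by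
          intro x hx
          have h2 : ∀ k, q • chi (Matrix.vecMul (Matrix.vecMul v (U - 1))
              (∑ i ∈ Finset.range k, U ^ i)) x = k • c := by
            intro k
            induction k with
            | zero => simp [chi_zero]
            | succ k ihk =>
              rw [Finset.sum_range_succ, Matrix.vecMul_add, chi_add, smul_add, ihk, succ_nsmul,
                ← chi_iterate, hc _ (hfS.iterate k hx)]
          rw [hgeom, h2]
        refine rot hS (N := n * m) (by rw [iterate_mul]; exact hν.iterate m) hνS v ?_ ?_
        · intro x hx h0
          have := hq' x hx
          rw [h0, smul_zero] at this
          exact hr _ hN this.symm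
        · intro x hx
          exact tor_const hq hq' (hfS.iterate _ hx) hx (hper x hx)
    · refine ortho hν v fun k hk => ?_
      rw [hgeom]
      apply ih
      · rw [Matrix.vecMul_vecMul, Matrix.vecMul_vecMul]
        have hcomm : Commute (∑ i ∈ Finset.range (n * k), U ^ i) ((U - 1) ^ j) :=
          Commute.pow_right (Commute.sum_left _ _ _ fun i _ =>
            ((Commute.refl U).sub_right (Commute.one_right _)).pow_left i) j
        rw [hcomm.eq, ← mul_assoc, ← pow_succ', ← Matrix.vecMul_vecMul, hv, Matrix.zero_vecMul]
      · exact fun h => hw (tor_of_geom hU (fun x hx => hfS hx) (by positivity) h)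

end

/-- If `μ` is an ergodic invariant measure for a unipotent toral automorphism `U` whose
support has exactly `m` connected components, then, for every `n` coprime to `m`, `μ` is the
unique `Uⁿ`-invariant Borel probability measure supported inside `supp μ`; i.e. the
restriction of `Uⁿ` to `supp μ` is uniquely ergodic with unique invariant measure `μ`. -/
theorem unique_ergodicity_on_support_unipotent
    {d : ℕ} (hd : 0 < d) (U : Matrix (Fin d) (Fin d) ℤ)
    (hUdet : IsUnit U.det) (hUuni : (U - 1) ^ d = 0)
    (μ : Measure (Torus d)) (hμp : IsProbabilityMeasure μ)
    (herg : Ergodic (toralAuto U) μ)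
    (m : ℕ) (hm : 0 < m) (hcomp : Nat.card (ConnectedComponents ↥(msupport μ)) = m)
    (n : ℕ) (hn : 0 < n) (hcop : Nat.Coprime n m) :
    Measure.map ((toralAuto U)^[n]) μ = μ ∧
      ∀ ν : Measure (Torus d), IsProbabilityMeasure ν →
        Measure.map ((toralAuto U)^[n]) ν = ν → msupport ν ⊆ msupport μ → ν = μ := by
  have hf := continuous_toralAuto U
  have hμn : MeasurePreserving ((toralAuto U)^[n]) μ μ := herg.toMeasurePreserving.iterate n
  refine ⟨hμn.map_eq, fun ν hνp hν hsub => ?_⟩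
  have hνn : MeasurePreserving ((toralAuto U)^[n]) ν ν := ⟨(hf.iterate n).measurable, hν⟩
  have hμS := ae_mem_msupport μ
  have hνS : ∀ᵐ x ∂ν, x ∈ msupport μ := (ae_mem_msupport ν).mono fun x hx => hsub hx
  have hS := isClosed_msupport μ
  have hfS := mapsTo_msupport hf herg.toMeasurePreserving
  have hfin : Finite (ConnectedComponents (msupport μ)) :=
    Nat.finite_of_card_ne_zero (by omega)
  have := Fintype.ofFinite (ConnectedComponents (msupport μ))
  obtain ⟨σ, hσ, hσm, hcyc⟩ := comp_main hf herg hm hcomp hfS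
  have hper : ∀ x (hx : x ∈ msupport μ), ConnectedComponents.mk
      (⟨(toralAuto U)^[n * m] x, hfS.iterate _ hx⟩ : msupport μ) =
        ConnectedComponents.mk ⟨x, hx⟩ := by
    intro x hx
    rw [comp_iterate hfS σ hσ (n * m) x hx, mul_comm, pow_mul, hσm, one_pow]
    rfl
  have hE : ∀ w, (∀ x ∈ msupport μ, chi (Matrix.vecMul w U) x = chi w x) →
      ∃ c, ∀ x ∈ msupport μ, chi w x = c := by
    intro w hw
    obtain ⟨c, hc⟩ := herg.ae_eq_const_of_ae_eq_comp_ae (g := chi w)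
      (continuous_chi w).aestronglyMeasurable (by
        filter_upwards [hμS] with x hx
        rw [Function.comp_apply, chi_toralAuto, hw x hx])
    exact ⟨c, fun x hx => msupport_subset μ
      (isClosed_eq (continuous_chi w) (continuous_const (y := c))) hc hx⟩
  apply measure_ext_ee
  intro v
  by_cases hv : TorS (msupport μ) v
  · refine tor_integral hS hv μ ν hμS hνS fun D => ?_
    rw [equi hS hfS σ hσ hcop hσm hcyc ν hνn hνS, equi hS hfS σ hσ hcop hσm hcyc μ hμn hμS]
  · have h0 : Matrix.vecMul v ((U - 1) ^ d) = 0 := by rw [hUuni, Matrix.vecMul_zero]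
    rw [main_zero hS hUuni hfS hE hm hn hper hνn hνS d v h0 hv,
      main_zero hS hUuni hfS hE hm hn hper hμn hμS d v h0 hv]
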